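/- Let y_m ≠ 0, K_m > 0 and n be real numbers, and let H = (y_m/(4·K_m))·[[0,0,0,0],[0,0,−n/y_m,0],[0,0,n/K_m,−1],[0,0,−1,0]] be the Hessian matrix of the modified Hill equation at [D] = K_m. Then the eigenvalues of H are exactly 0 (with algebraic multiplicity two), (n − √(4·K_m² + n²))·y_m/(8·K_m²), and (n + √(4·K_m² + n²))·y_m/(8·K_m²); equivalently, the characteristic polynomial of H is λ²·(λ² − (n·y_m/(4·K_m²))·λ − y_m²/(16·K_m²)). -/

import Mathlib

open Polynomial

/-!
The first two columns of `H` vanish, so `H` is block upper triangular with zero upper left block,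
and its characteristic polynomial is `X ^ 2` times that of its lower right `2 × 2` block. The two
remaining eigenvalues are then recognised by their sum and product, the trace and determinant of
that block.
-/

theorem charpoly_eq_X_pow_mul_of_castAdd_col_eq_zero {R : Type*} [CommRing R] {m k : ℕ}
    (A : Matrix (Fin (m + k)) (Fin (m + k)) R) (hA : ∀ i j, A i (Fin.castAdd k j) = 0) :
    A.charpoly = X ^ m * (A.submatrix (Fin.natAdd m) (Fin.natAdd m)).charpoly := by
  have hblocks : A.reindex finSumFinEquiv.symm finSumFinEquiv.symm =
      Matrix.fromBlocks 0 (A.submatrix (Fin.castAdd k) (Fin.natAdd m)) 0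
        (A.submatrix (Fin.natAdd m) (Fin.natAdd m)) := by
    ext (i | i) (j | j) <;> simp [hA]
  rw [← Matrix.charpoly_reindex finSumFinEquiv.symm, hblocks,
    Matrix.charpoly_fromBlocks_zero₂₁, Matrix.charpoly_zero, Fintype.card_fin]

theorem roots_charpoly_fin_two_eq_pair_iff {R : Type*} [CommRing R] [IsDomain R]
    {A : Matrix (Fin 2) (Fin 2) R} {p q : R} :
    A.charpoly.roots = {p, q} ↔ p + q = A.trace ∧ p * q = A.det := by
  have hcharpoly : A.charpoly = C 1 * X ^ 2 + C (-A.trace) * X + C A.det := by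
    rw [Matrix.charpoly_fin_two, C_1, C_neg]
    ring
  rw [hcharpoly, roots_quadratic_eq_pair_iff_of_ne_zero one_ne_zero, neg_one_mul, neg_inj,
    one_mul, eq_comm, eq_comm (a := A.det)]

theorem stmt16_general {F : Type*} [Field F] (h2 : (2 : F) ≠ 0) {ym Km n s c : F} (hK : Km ≠ 0)
    (hs : s ^ 2 = 4 * Km ^ 2 + n ^ 2) {H : Matrix (Fin 4) (Fin 4) F}
    (hH : H = (ym / (4 * Km)) •
      !![0, 0, 0, 0;
         0, 0, c, 0;
         0, 0, n / Km, -1;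
         0, 0, -1, 0]) :
    H.charpoly
      = X ^ 2 * (X ^ 2 - C (n * ym / (4 * Km ^ 2)) * X - C (ym ^ 2 / (16 * Km ^ 2))) ∧
    H.charpoly.roots
      = {0, 0, (n - s) * ym / (8 * Km ^ 2), (n + s) * ym / (8 * Km ^ 2)} := by
  let B : Matrix (Fin 2) (Fin 2) F := H.submatrix (Fin.natAdd 2) (Fin.natAdd 2)
  have hcharpoly : H.charpoly = X ^ 2 * B.charpoly :=
    charpoly_eq_X_pow_mul_of_castAdd_col_eq_zero (m := 2) (k := 2) H fun i j ↦ by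
      fin_cases i <;> fin_cases j <;> simp [hH]
  have hB : B = !![ym / (4 * Km) * (n / Km), -(ym / (4 * Km)); -(ym / (4 * Km)), 0] := by
    ext i j
    fin_cases i <;> fin_cases j <;> simp [B, hH]
  -- In arbitrary odd or zero characteristic, `field_simp` needs the numerals as powers of two.
  have h4 : (4 : F) = 2 ^ 2 := by norm_num
  have h8 : (8 : F) = 2 ^ 3 := by norm_num
  have h16 : (16 : F) = 2 ^ 4 := by norm_num
  have htrace : B.trace = n * ym / (4 * Km ^ 2) := by
    rw [hB, Matrix.trace_fin_two_of]
    field_simp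
    ring
  have hdet : B.det = -(ym ^ 2 / (16 * Km ^ 2)) := by
    rw [hB, Matrix.det_fin_two_of, h4, h16]
    field_simp
    ring
  have hsum : (n - s) * ym / (8 * Km ^ 2) + (n + s) * ym / (8 * Km ^ 2) = B.trace := by
    rw [htrace, h4, h8]
    field_simp
    ring
  have hprod : (n - s) * ym / (8 * Km ^ 2) * ((n + s) * ym / (8 * Km ^ 2)) = B.det := by
    rw [hdet, h8, h16]
    field_simp
    linear_combination -ym ^ 2 * hs
  constructor
  · rw [hcharpoly, Matrix.charpoly_fin_two, htrace, hdet, C_neg, ← sub_eq_add_neg]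
  · rw [hcharpoly, roots_mul (mul_ne_zero (pow_ne_zero 2 X_ne_zero) B.charpoly_monic.ne_zero),
      roots_X_pow, roots_charpoly_fin_two_eq_pair_iff.mpr ⟨hsum, hprod⟩]
    rfl

/-- The eigenvalues of the Hessian matrix of the modified Hill equation at
`[D] = K_m` are exactly `0` (with algebraic multiplicity two),
`(n − √(4K_m² + n²))·y_m/(8K_m²)` and `(n + √(4K_m² + n²))·y_m/(8K_m²)`;
equivalently its characteristic polynomial is
`λ²·(λ² − (n·y_m/(4K_m²))·λ − y_m²/(16K_m²))`. -/
theorem stmt16 (ym Km n : ℝ) (hym : ym ≠ 0) (hK : 0 < Km)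
    (H : Matrix (Fin 4) (Fin 4) ℝ)
    (hH : H = (ym / (4 * Km)) •
      (!![0, 0, 0, 0;
          0, 0, -n / ym, 0;
          0, 0, n / Km, -1;
          0, 0, -1, 0] : Matrix (Fin 4) (Fin 4) ℝ)) :
    H.charpoly
      = X ^ 2 * (X ^ 2 - C (n * ym / (4 * Km ^ 2)) * X - C (ym ^ 2 / (16 * Km ^ 2))) ∧
    H.charpoly.roots
      = {0, 0, (n - Real.sqrt (4 * Km ^ 2 + n ^ 2)) * ym / (8 * Km ^ 2),
          (n + Real.sqrt (4 * Km ^ 2 + n ^ 2)) * ym / (8 * Km ^ 2)} :=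
  stmt16_general two_ne_zero hK.ne' (Real.sq_sqrt (by positivity)) hH
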